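/- Let Δ be a Cohen-Macaulay simplicial forest on vertex set V(Δ) and let R = K[x_v : v ∈ V(Δ)] be a polynomial ring over a field K. Then for each 1 ≤ k ≤ ν(Δ), dim(R/I(Δ)^{[k]}) = |V(Δ)| − ν(Δ) + k − 1, where dim denotes Krull dimension. -/

import Mathlib

/-!
Two facts pin down the dimension of `R/I^{[k]}`.  A prime containing `I^{[k]}` omits fewer than `k`
of the monomials `x_F` with `F` in a matching of size `ν`, since the product of `k` of them lies in
`I^{[k]}`; so it contains at least `ν - k + 1` variables.  Conversely, if `C` is a vertex cover of
size `ν`, then every square-free monomial in `I^k` involves at least `k` variables of `C`, so any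
`ν - k + 1` variables of `C` generate a prime containing `I^{[k]}`.

Such a cover exists for a grafted complex: the traces of the facets on a leaf form a chain, by
induction on deleting the joint of the leaf, so choosing a vertex in the smallest nonempty trace on
each leaf gives a vertex cover with as many vertices as there are leaves.
-/

open MvPolynomial

/-- A simplicial complex on the vertex set `V`, presented by its set of facets
(the maximal faces).  Every facet is nonempty and no facet contains another. -/
structure SimplicialComplexOn (V : Type) [Fintype V] [DecidableEq V] : Type where
  facets : Finset (Finset V)
  nonempty_facet : ∀ F ∈ facets, F.Nonempty
  antichain : ∀ F ∈ facets, ∀ G ∈ facets, F ⊆ G → F = G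

variable {V : Type} [Fintype V] [DecidableEq V]

/-- `F` is a leaf of the collection of facets `S`: either `F` is the only facet, or
there is a facet `G ≠ F` (a joint) with `F ∩ H ⊆ F ∩ G` for every facet `H ≠ F`. -/
def IsLeafOf (S : Finset (Finset V)) (F : Finset V) : Prop :=
  F ∈ S ∧ ((∀ H ∈ S, H = F) ∨
    ∃ G ∈ S, G ≠ F ∧ ∀ H ∈ S, H ≠ F → F ∩ H ⊆ F ∩ G)

/-- The forest property for a facet collection: every nonempty subcollection
(i.e. every nonempty subcomplex) has a leaf. -/
def HasLeafProp (S : Finset (Finset V)) : Prop :=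
  ∀ T ⊆ S, T.Nonempty → ∃ F, IsLeafOf T F

/-- A good leaf: a facet which is a leaf of every subcomplex containing it. -/
def IsGoodLeafOf (S : Finset (Finset V)) (F : Finset V) : Prop :=
  F ∈ S ∧ ∀ T ⊆ S, F ∈ T → IsLeafOf T F

/-- A special leaf: a leaf `F` such that for all facets `H, H' ≠ F`,
`H ∩ H' ≠ ∅` iff `(H ∩ H') \ F ≠ ∅`. -/
def IsSpecialLeafOf (S : Finset (Finset V)) (F : Finset V) : Prop :=
  IsLeafOf S F ∧ ∀ H ∈ S, ∀ H' ∈ S, H ≠ F → H' ≠ F →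
    ((H ∩ H').Nonempty ↔ ((H ∩ H') \ F).Nonempty)

/-- A matching: a subcollection of the facets that is pairwise disjoint. -/
def IsMatchingOf (S : Finset (Finset V)) (M : Finset (Finset V)) : Prop :=
  M ⊆ S ∧ ∀ F ∈ M, ∀ G ∈ M, F ≠ G → F ∩ G = ∅

/-- The matching number: maximum size of a matching. -/
noncomputable def matchingNumberOf (S : Finset (Finset V)) : ℕ :=
  sSup {n | ∃ M : Finset (Finset V), IsMatchingOf S M ∧ M.card = n}

/-- The facet collection `S` is grafted: it decomposes as `Fs ∪ Gs` where
(1) every vertex of a `G ∈ Gs` lies in some `F ∈ Fs`, (2) `Fs` is exactly the set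
of leaves of `S`, (3) `Fs` and `Gs` are disjoint, (4) the members of `Fs` are
pairwise disjoint, and (5) for each `G ∈ Gs`, deleting the facet `G` leaves a
grafted collection. -/
inductive IsGrafted : Finset (Finset V) → Prop where
  | intro (S Fs Gs : Finset (Finset V))
      (hunion : S = Fs ∪ Gs)
      (hdisj : Disjoint Fs Gs)
      (hcover : ∀ G ∈ Gs, ∀ v ∈ G, ∃ F ∈ Fs, v ∈ F)
      (hleaves : ∀ F, IsLeafOf S F ↔ F ∈ Fs)
      (hFdisj : ∀ F ∈ Fs, ∀ F' ∈ Fs, F ≠ F' → F ∩ F' = ∅)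
      (hrec : ∀ G ∈ Gs, IsGrafted (S.erase G)) :
      IsGrafted S

/-- `S` is the (minimal presentation of the) grafting of the collection `Gs`
with the simplices `Fs`. -/
def IsGraftingDecomp (S Fs Gs : Finset (Finset V)) : Prop :=
  S = Fs ∪ Gs ∧ Disjoint Fs Gs ∧
  (∀ G ∈ Gs, ∀ v ∈ G, ∃ F ∈ Fs, v ∈ F) ∧
  (∀ F, IsLeafOf S F ↔ F ∈ Fs) ∧
  (∀ F ∈ Fs, ∀ F' ∈ Fs, F ≠ F' → F ∩ F' = ∅) ∧
  (∀ G ∈ Gs, IsGrafted (S.erase G))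

/-- A Cohen-Macaulay simplicial forest, combinatorially: a grafted simplicial forest. -/
def IsCMForestFacets (S : Finset (Finset V)) : Prop :=
  HasLeafProp S ∧ IsGrafted S

/-- The closed neighborhood `N[F] = {F} ∪ {G ∈ S : G ≠ F, G ∩ F ≠ ∅}`. -/
def closedNbhd (S : Finset (Finset V)) (F : Finset V) : Finset (Finset V) :=
  insert F (S.filter fun G => G ≠ F ∧ (G ∩ F).Nonempty)

/-- The contraction of the facet collection `S` on `A`: the minimal members of
`{F \ A : F ∈ S}`. -/
def contraction (S : Finset (Finset V)) (A : Finset V) : Finset (Finset V) :=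
  (S.image fun F => F \ A).filter fun F' => ∀ G ∈ S, G \ A ⊆ F' → G \ A = F'

variable (K : Type) [Field K]

/-- The square-free monomial `x_S = ∏_{v ∈ S} x_v`. -/
noncomputable def xMon (S : Finset V) : MvPolynomial V K := ∏ v ∈ S, X v

/-- The facet ideal `I(Δ) = ⟨x_F : F a facet⟩`. -/
noncomputable def facetIdealOf (S : Finset (Finset V)) : Ideal (MvPolynomial V K) :=
  Ideal.span { p | ∃ F ∈ S, p = xMon K F }

/-- The `k`-th square-free power of an ideal: the ideal generated by all
square-free monomials lying in `I ^ k`. -/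
noncomputable def sqfreePow (I : Ideal (MvPolynomial V K)) (k : ℕ) :
    Ideal (MvPolynomial V K) :=
  Ideal.span { p | (∃ S : Finset V, p = xMon K S) ∧ p ∈ I ^ k }

/-- The depth of `R/I` with respect to the homogeneous maximal ideal
`m = ⟨x_v : v ∈ V⟩`: the largest length of an `R/I`-regular sequence of
elements of `m`. -/
noncomputable def gradedDepth (I : Ideal (MvPolynomial V K)) : ℕ :=
  sSup {n | ∃ rs : List (MvPolynomial V K), rs.length = n ∧
    (∀ r ∈ rs, r ∈ Ideal.span (Set.range (X : V → MvPolynomial V K))) ∧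
    RingTheory.Sequence.IsRegular (MvPolynomial V K ⧸ I) rs}

/-- `R/I` is Cohen-Macaulay: its depth equals its Krull dimension. -/
def IsCMQuot (I : Ideal (MvPolynomial V K)) : Prop :=
  ((gradedDepth K I : ℕ∞) : WithBot ℕ∞) = ringKrullDim (MvPolynomial V K ⧸ I)

section Statements

variable {V : Type} [Fintype V] [DecidableEq V] (K : Type) [Field K]

/-- A vertex cover: a set of vertices meeting every facet.  In the polynomial ring, `C` covers `S`
exactly when the facet ideal of `S` lies in the prime generated by the variables of `C`. -/
def IsVertexCoverOf (S : Finset (Finset V)) (C : Finset V) : Prop :=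
  ∀ F ∈ S, (F ∩ C).Nonempty

/-- The König property: some vertex cover is as small as the matching number.  A vertex cover is
never smaller than that, so equality is required instead of `≤`. -/
def HasKonigProperty (S : Finset (Finset V)) : Prop :=
  ∃ C, IsVertexCoverOf S C ∧ C.card = matchingNumberOf S

section Matchings

variable {α : Type} [DecidableEq α] {S M N : Finset (Finset α)} {C : Finset α}

theorem IsMatchingOf.subset (hM : IsMatchingOf S M) (hNM : N ⊆ M) : IsMatchingOf S N :=
  ⟨hNM.trans hM.1, fun F hF G hG => hM.2 F (hNM hF) G (hNM hG)⟩

theorem IsMatchingOf.pairwiseDisjoint (hM : IsMatchingOf S M) :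
    (M : Set (Finset α)).PairwiseDisjoint id :=
  fun F hF G hG hFG => Finset.disjoint_iff_inter_eq_empty.2 (hM.2 F hF G hG hFG)

theorem IsMatchingOf.card_le_card_of_isVertexCoverOf (hM : IsMatchingOf S M)
    (hC : IsVertexCoverOf M C) : M.card ≤ C.card :=
  calc M.card ≤ (M.biUnion fun F => F ∩ C).card :=
        Finset.card_le_card_biUnion
          (hM.pairwiseDisjoint.mono fun _ => Finset.inter_subset_left) hC
    _ ≤ C.card :=
        Finset.card_le_card (Finset.biUnion_subset.2 fun _ _ => Finset.inter_subset_right)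

theorem bddAbove_card_isMatchingOf (S : Finset (Finset α)) :
    BddAbove {n | ∃ M, IsMatchingOf S M ∧ M.card = n} := by
  refine ⟨S.card, ?_⟩
  rintro _ ⟨M, hM, rfl⟩
  exact Finset.card_le_card hM.1

theorem IsMatchingOf.card_le_matchingNumberOf (hM : IsMatchingOf S M) :
    M.card ≤ matchingNumberOf S :=
  le_csSup (bddAbove_card_isMatchingOf S) ⟨M, hM, rfl⟩

theorem exists_isMatchingOf_card_eq_matchingNumberOf (S : Finset (Finset α)) :
    ∃ M, IsMatchingOf S M ∧ M.card = matchingNumberOf S := by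
  have hempty : IsMatchingOf S ∅ := ⟨Finset.empty_subset S, by simp⟩
  have hne : {n | ∃ M, IsMatchingOf S M ∧ M.card = n}.Nonempty := ⟨0, ∅, hempty, rfl⟩
  exact Nat.sSup_mem hne (bddAbove_card_isMatchingOf S)

theorem IsMatchingOf.hasKonigProperty (hM : IsMatchingOf S M) (hC : IsVertexCoverOf S C)
    (hCM : C.card ≤ M.card) : HasKonigProperty S := by
  obtain ⟨N, hN, hNS⟩ := exists_isMatchingOf_card_eq_matchingNumberOf S
  have hNC : N.card ≤ C.card := hN.card_le_card_of_isVertexCoverOf fun F hF => hC F (hN.1 hF)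
  exact ⟨C, hC, le_antisymm (hCM.trans hM.card_le_matchingNumberOf) (hNS ▸ hNC)⟩

end Matchings

section Grafted

variable {α : Type} [DecidableEq α] {S : Finset (Finset α)} {F F' G H H' : Finset α} {v : α}

theorem IsLeafOf.exists_free_vertex (hF : IsLeafOf S F) (hne : F.Nonempty)
    (hanti : IsAntichain (· ⊆ ·) (S : Set (Finset α))) :
    ∃ v ∈ F, ∀ H ∈ S, v ∈ H → H = F := by
  obtain ⟨hFS, hsingle | ⟨G, hG, hGF, hjoint⟩⟩ := hF
  · obtain ⟨v, hv⟩ := hne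
    exact ⟨v, hv, fun H hH _ => hsingle H hH⟩
  · obtain ⟨v, hvF, hvG⟩ := Finset.not_subset.1 (hanti hFS hG hGF.symm)
    refine ⟨v, hvF, fun H hH hvH => by_contra fun hHF => hvG ?_⟩
    exact Finset.mem_of_mem_inter_right (hjoint H hH hHF (Finset.mem_inter.2 ⟨hvF, hvH⟩))

theorem IsGrafted.exists_isLeafOf_mem (hS : IsGrafted S) (hH : H ∈ S) (hv : v ∈ H) :
    ∃ F, IsLeafOf S F ∧ v ∈ F := by
  obtain ⟨_, Fs, Gs, rfl, -, hcover, hleaves, -, -⟩ := hS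
  simp only [hleaves]
  rcases Finset.mem_union.1 hH with hH | hH
  · exact ⟨H, hH, hv⟩
  · exact hcover H hH v hv

theorem IsGrafted.inter_eq_empty_of_isLeafOf (hS : IsGrafted S) (hF : IsLeafOf S F)
    (hF' : IsLeafOf S F') (hne : F ≠ F') : F ∩ F' = ∅ := by
  obtain ⟨_, Fs, Gs, -, -, -, hleaves, hdisj, -⟩ := hS
  exact hdisj F ((hleaves F).1 hF) F' ((hleaves F').1 hF') hne

theorem IsGrafted.erase (hS : IsGrafted S) (hG : G ∈ S) (hleaf : ¬ IsLeafOf S G) :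
    IsGrafted (S.erase G) := by
  obtain ⟨_, Fs, Gs, rfl, -, -, hleaves, -, hrec⟩ := hS
  exact hrec G ((Finset.mem_union.1 hG).resolve_left (mt (hleaves G).2 hleaf))

theorem IsGrafted.isLeafOf_of_free_vertex (hS : IsGrafted S) (hF : F ∈ S) (hv : v ∈ F)
    (hfree : ∀ H ∈ S, v ∈ H → H = F) : IsLeafOf S F := by
  obtain ⟨F', hF', hvF'⟩ := hS.exists_isLeafOf_mem hF hv
  exact hfree F' hF'.1 hvF' ▸ hF'

theorem IsGrafted.inter_subset_or_inter_subset (hS : IsGrafted S)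
    (hanti : IsAntichain (· ⊆ ·) (S : Set (Finset α))) (hF : IsLeafOf S F)
    (hH : H ∈ S) (hH' : H' ∈ S) : F ∩ H ⊆ F ∩ H' ∨ F ∩ H' ⊆ F ∩ H := by
  induction S using Finset.strongInduction with
  | H S ih =>
    rcases F.eq_empty_or_nonempty with rfl | hne
    · simp
    obtain ⟨v, hvF, hfree⟩ := hF.exists_free_vertex hne hanti
    by_cases hHF : H = F
    · simp [hHF]
    by_cases hHF' : H' = F
    · simp [hHF']
    obtain ⟨hFS, hsingle | ⟨G, hG, hGF, hjoint⟩⟩ := id hF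
    · exact absurd (hsingle H hH) hHF
    by_cases hHG : H = G
    · exact .inr (hHG ▸ hjoint H' hH' hHF')
    by_cases hHG' : H' = G
    · exact .inl (hHG' ▸ hjoint H hH hHF)
    by_cases hGleaf : IsLeafOf S G
    · have hFG : F ∩ G = ∅ := hS.inter_eq_empty_of_isLeafOf hF hGleaf hGF.symm
      exact .inl ((hjoint H hH hHF).trans (by simp [hFG]))
    -- A free vertex of `F` stays free when the joint is deleted, so `F` stays a leaf.
    have hFleaf : IsLeafOf (S.erase G) F :=
      (hS.erase hG hGleaf).isLeafOf_of_free_vertex (Finset.mem_erase.2 ⟨hGF.symm, hFS⟩) hvF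
        fun H hH => hfree H (Finset.mem_of_mem_erase hH)
    exact ih _ (Finset.erase_ssubset hG) (hS.erase hG hGleaf)
      (hanti.subset (Finset.coe_subset.2 (Finset.erase_subset G S))) hFleaf
      (Finset.mem_erase.2 ⟨hHG, hH⟩) (Finset.mem_erase.2 ⟨hHG', hH'⟩)

theorem IsGrafted.exists_mem_of_inter_nonempty (hS : IsGrafted S)
    (hanti : IsAntichain (· ⊆ ·) (S : Set (Finset α))) (hF : IsLeafOf S F) (hne : F.Nonempty) :
    ∃ c, ∀ H ∈ S, (F ∩ H).Nonempty → c ∈ H := by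
  have hFmem : F ∈ S.filter fun H => (F ∩ H).Nonempty := by simp [hF.1, hne]
  obtain ⟨H₀, hH₀, hmin⟩ := Finset.exists_min_image _ (fun H => (F ∩ H).card) ⟨F, hFmem⟩
  obtain ⟨hH₀S, c, hc⟩ := Finset.mem_filter.1 hH₀
  refine ⟨c, fun H hH hFH => Finset.mem_of_mem_inter_right (s₁ := F) ?_⟩
  rcases hS.inter_subset_or_inter_subset hanti hF hH hH₀S with hsub | hsub
  · rwa [Finset.eq_of_subset_of_card_le hsub (hmin H (Finset.mem_filter.2 ⟨hH, hFH⟩))]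
  · exact hsub hc

theorem IsGrafted.hasKonigProperty (hS : IsGrafted S) (hne : ∀ F ∈ S, F.Nonempty)
    (hanti : IsAntichain (· ⊆ ·) (S : Set (Finset α))) : HasKonigProperty S := by
  classical
  let L := S.filter (IsLeafOf S)
  have hL : ∀ F ∈ L, IsLeafOf S F := fun F hF => (Finset.mem_filter.1 hF).2
  have hLmatching : IsMatchingOf S L :=
    ⟨Finset.filter_subset _ _, fun F hF G hG => hS.inter_eq_empty_of_isLeafOf (hL F hF) (hL G hG)⟩
  choose c hc using fun F : L =>
    hS.exists_mem_of_inter_nonempty hanti (hL F F.2) (hne F (hL F F.2).1)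
  refine hLmatching.hasKonigProperty (C := L.attach.image c) (fun H hH => ?_)
    (Finset.card_image_le.trans_eq L.card_attach)
  obtain ⟨v, hv⟩ := hne H hH
  obtain ⟨F, hF, hvF⟩ := hS.exists_isLeafOf_mem hH hv
  have hFL : F ∈ L := Finset.mem_filter.2 ⟨hF.1, hF⟩
  exact ⟨c ⟨F, hFL⟩, Finset.mem_inter.2 ⟨hc ⟨F, hFL⟩ H hH ⟨v, Finset.mem_inter.2 ⟨hvF, hv⟩⟩,
    Finset.mem_image_of_mem c (Finset.mem_attach L _)⟩⟩

end Grafted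

section KrullDim

variable {σ τ R : Type*} [CommRing R]

theorem ker_killCompl {f : σ → τ} (hf : Function.Injective f) :
    RingHom.ker (killCompl hf : MvPolynomial τ R →ₐ[R] MvPolynomial σ R) =
      Ideal.span (X '' (Set.range f)ᶜ) := by
  apply le_antisymm
  · intro p hp
    refine mem_ideal_span_X_image.2 fun m hm => by_contra fun hout => mem_support_iff.1 hm ?_
    have hsupp : (m.support : Set τ) ⊆ Set.range f := fun i hi =>
      by_contra fun hif => hout ⟨i, hif, Finsupp.mem_support_iff.1 hi⟩
    rw [← m.mapDomain_comapDomain f hf hsupp, ← coeff_killCompl hf, RingHom.mem_ker.1 hp,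
      coeff_zero]
  · rw [Ideal.span_le]
    rintro _ ⟨i, hi, rfl⟩
    rw [SetLike.mem_coe, RingHom.mem_ker, killCompl, aeval_X, dif_neg hi]

theorem ringKrullDim_quotient_span_X_image [IsNoetherianRing R] [Finite σ] (D : Set σ) :
    ringKrullDim (MvPolynomial σ R ⧸ Ideal.span (X '' D : Set (MvPolynomial σ R))) =
      ringKrullDim R + Nat.card (Dᶜ : Set σ) := by
  have hinj : Function.Injective ((↑) : (Dᶜ : Set σ) → σ) := Subtype.val_injective
  have hker := ker_killCompl (R := R) hinj
  rw [Subtype.range_coe, compl_compl] at hker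
  have hsurj : Function.Surjective (killCompl (R := R) hinj) := fun p =>
    ⟨rename _ p, killCompl_rename_app hinj p⟩
  rw [← hker, ringKrullDim_eq_of_ringEquiv
    (Ideal.quotientKerAlgEquivOfSurjective hsurj).toRingEquiv,
    ringKrullDim_of_isNoetherianRing]

theorem ringKrullDim_quotient_span_X_image_finset {K : Type*} [Field K] [Fintype σ]
    (D : Finset σ) :
    ringKrullDim (MvPolynomial σ K ⧸ Ideal.span (X '' (D : Set σ) : Set (MvPolynomial σ K))) =
      (((Fintype.card σ - D.card : ℕ) : ℕ∞) : WithBot ℕ∞) := by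
  classical
  have hcard : Nat.card ((D : Set σ)ᶜ : Set σ) = Fintype.card σ - D.card := by
    rw [Nat.card_coe_set_eq, ← Finset.coe_compl, Set.ncard_coe_finset, Finset.card_compl]
  rw [ringKrullDim_quotient_span_X_image, ringKrullDim_eq_zero_of_field, zero_add, hcard]
  rfl

theorem ringKrullDim_quotient_le_of_forall_isPrime {I : Ideal R} {d : WithBot ℕ∞}
    (h : ∀ P : Ideal R, P.IsPrime → I ≤ P → ringKrullDim (R ⧸ P) ≤ d) :
    ringKrullDim (R ⧸ I) ≤ d := by
  rw [ringKrullDim_quotient, Order.krullDim_eq_iSup_coheight]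
  refine iSup_le fun p => le_trans ?_ (h p.1.asIdeal p.1.isPrime p.2)
  rw [Order.coheight_eq_krullDim_Ici, ringKrullDim_quotient]
  exact Order.krullDim_le_of_strictMono
    (fun q : Set.Ici p => (⟨q.1.1, q.2⟩ : PrimeSpectrum.zeroLocus (p.1.asIdeal : Set R)))
    fun _ _ hqr => hqr

theorem ringKrullDim_quotient_anti {I J : Ideal R} (h : I ≤ J) :
    ringKrullDim (R ⧸ J) ≤ ringKrullDim (R ⧸ I) :=
  ringKrullDim_le_of_surjective (Ideal.Quotient.factor h) (Ideal.Quotient.factor_surjective h)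

end KrullDim

section SquarefreePower

variable {K : Type} [Field K] {α : Type} [DecidableEq α]
  {S M : Finset (Finset α)} {A C D : Finset α} {k : ℕ}

theorem xMon_mem_span_X_image (h : (A ∩ D).Nonempty) :
    xMon K A ∈ Ideal.span (X '' (D : Set α) : Set (MvPolynomial α K)) := by
  obtain ⟨v, hv⟩ := h
  rw [Finset.mem_inter] at hv
  exact Ideal.prod_mem _ hv.1 (Ideal.subset_span ⟨v, hv.2, rfl⟩)

theorem IsVertexCoverOf.facetIdealOf_le (hC : IsVertexCoverOf S C) :
    facetIdealOf K S ≤ Ideal.span (X '' (C : Set α)) := by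
  rw [facetIdealOf, Ideal.span_le]
  rintro _ ⟨F, hF, rfl⟩
  exact xMon_mem_span_X_image (hC F hF)

theorem le_card_inter_of_xMon_mem_span_X_image_pow
    (hA : xMon K A ∈ Ideal.span (X '' (C : Set α)) ^ k) : k ≤ (A ∩ C).card := by
  -- Setting the variables of `C` to `t` and all others to `1` reduces the claim to divisibility of
  -- powers of `t`.
  let φ : MvPolynomial α K →ₐ[K] Polynomial K := aeval fun v => if v ∈ C then Polynomial.X else 1
  have hφA : φ (xMon K A) = Polynomial.X ^ (A ∩ C).card := by
    simp [φ, xMon]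
  have hφC : (Ideal.span (X '' (C : Set α))).map φ ≤ Ideal.span {Polynomial.X} := by
    rw [Ideal.map_span, Ideal.span_le]
    rintro _ ⟨_, ⟨v, hv, rfl⟩, rfl⟩
    simp [φ, Finset.mem_coe.1 hv]
  have hmem : φ (xMon K A) ∈ Ideal.span {Polynomial.X} ^ k :=
    Ideal.pow_right_mono hφC k (Ideal.map_pow φ _ k ▸ Ideal.mem_map_of_mem φ hA)
  rw [hφA, Ideal.span_singleton_pow, Ideal.mem_span_singleton] at hmem
  exact (pow_dvd_pow_iff Polynomial.X_ne_zero Polynomial.not_isUnit_X).1 hmem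

theorem IsVertexCoverOf.sqfreePow_facetIdealOf_le (hC : IsVertexCoverOf S C) (hDC : D ⊆ C)
    (hcard : C.card < k + D.card) :
    sqfreePow K (facetIdealOf K S) k ≤ Ideal.span (X '' (D : Set α)) := by
  rw [sqfreePow, Ideal.span_le]
  rintro _ ⟨⟨A, rfl⟩, hA⟩
  have hkA : k ≤ (A ∩ C).card :=
    le_card_inter_of_xMon_mem_span_X_image_pow (Ideal.pow_right_mono hC.facetIdealOf_le k hA)
  have hACD : (A ∩ C ∩ D).Nonempty :=
    Finset.inter_nonempty_of_card_lt_card_add_card Finset.inter_subset_right hDC (by lia)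
  exact xMon_mem_span_X_image (hACD.mono (by gcongr; exact Finset.inter_subset_left))

theorem IsMatchingOf.prod_xMon_mem_sqfreePow (hM : IsMatchingOf S M) :
    ∏ F ∈ M, xMon K F ∈ sqfreePow K (facetIdealOf K S) M.card := by
  have hprod : ∏ F ∈ M, xMon K F = xMon K (M.biUnion id) :=
    (Finset.prod_biUnion hM.pairwiseDisjoint).symm
  refine Ideal.subset_span ⟨⟨_, hprod⟩, ?_⟩
  simpa using Ideal.prod_mem_prod (I := fun _ => facetIdealOf K S)
    fun F hF => Ideal.subset_span ⟨F, hM.1 hF, rfl⟩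

theorem IsMatchingOf.card_lt_of_forall_xMon_notMem (hM : IsMatchingOf S M)
    {P : Ideal (MvPolynomial α K)} [P.IsPrime] (hle : sqfreePow K (facetIdealOf K S) k ≤ P)
    (hMP : ∀ F ∈ M, xMon K F ∉ P) : M.card < k := by
  by_contra! hk
  obtain ⟨N, hNM, rfl⟩ := Finset.exists_subset_card_eq hk
  obtain ⟨F, hF, hFP⟩ :=
    Ideal.IsPrime.prod_mem_iff.1 (hle (hM.subset hNM).prod_xMon_mem_sqfreePow)
  exact hMP F (hNM hF) hFP

theorem IsMatchingOf.exists_span_X_image_le (hM : IsMatchingOf S M)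
    {P : Ideal (MvPolynomial α K)} [P.IsPrime] (hle : sqfreePow K (facetIdealOf K S) k ≤ P) :
    ∃ D : Finset α, M.card < k + D.card ∧ Ideal.span (X '' (D : Set α)) ≤ P := by
  classical
  let D : Finset α := (M.biUnion id).filter fun v => (X v : MvPolynomial α K) ∈ P
  refine ⟨D, ?_, Ideal.span_le.2 ?_⟩
  · have hcover : IsVertexCoverOf (M.filter (xMon K · ∈ P)) D := fun F hF => by
      obtain ⟨v, hvF, hvP⟩ := Ideal.IsPrime.prod_mem_iff.1 (Finset.mem_filter.1 hF).2
      have hvM : v ∈ M.biUnion id :=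
        Finset.mem_biUnion.2 ⟨F, Finset.mem_of_mem_filter F hF, hvF⟩
      exact ⟨v, Finset.mem_inter.2 ⟨hvF, Finset.mem_filter.2 ⟨hvM, hvP⟩⟩⟩
    have hin : (M.filter (xMon K · ∈ P)).card ≤ D.card :=
      (hM.subset (Finset.filter_subset _ _)).card_le_card_of_isVertexCoverOf hcover
    have hout : (M.filter (xMon K · ∉ P)).card < k :=
      (hM.subset (Finset.filter_subset _ _)).card_lt_of_forall_xMon_notMem hle
        fun F hF => (Finset.mem_filter.1 hF).2
    have := Finset.card_filter_add_card_filter_not (s := M) (xMon K · ∈ P)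
    lia
  · rintro _ ⟨v, hv, rfl⟩
    exact (Finset.mem_filter.1 hv).2

theorem IsMatchingOf.ringKrullDim_quotient_sqfreePow_le [Fintype α] (hM : IsMatchingOf S M) :
    ringKrullDim (MvPolynomial α K ⧸ sqfreePow K (facetIdealOf K S) k) ≤
      (((Fintype.card α - (M.card + 1 - k) : ℕ) : ℕ∞) : WithBot ℕ∞) := by
  refine ringKrullDim_quotient_le_of_forall_isPrime fun P _ hle => ?_
  obtain ⟨D, hcard, hDP⟩ := hM.exists_span_X_image_le hle
  refine (ringKrullDim_quotient_anti hDP).trans ?_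
  rw [ringKrullDim_quotient_span_X_image_finset]
  have : Fintype.card α - D.card ≤ Fintype.card α - (M.card + 1 - k) := by lia
  exact_mod_cast this

theorem IsVertexCoverOf.le_ringKrullDim_quotient_sqfreePow [Fintype α]
    (hC : IsVertexCoverOf S C) (hk : 1 ≤ k) :
    (((Fintype.card α - (C.card + 1 - k) : ℕ) : ℕ∞) : WithBot ℕ∞) ≤
      ringKrullDim (MvPolynomial α K ⧸ sqfreePow K (facetIdealOf K S) k) := by
  obtain ⟨D, hDC, hD⟩ : ∃ D ⊆ C, D.card = C.card + 1 - k :=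
    Finset.exists_subset_card_eq (by lia)
  rw [← hD, ← ringKrullDim_quotient_span_X_image_finset (K := K) D]
  exact ringKrullDim_quotient_anti (hC.sqfreePow_facetIdealOf_le hDC (by lia))

end SquarefreePower

theorem stmt3_general {S : Finset (Finset V)} (hS : HasKonigProperty S) {k : ℕ} (hk : 1 ≤ k)
    (hkν : k ≤ matchingNumberOf S + 1) :
    ringKrullDim (MvPolynomial V K ⧸ sqfreePow K (facetIdealOf K S) k) =
      (((Fintype.card V - matchingNumberOf S + k - 1 : ℕ) : ℕ∞) : WithBot ℕ∞) := by
  obtain ⟨C, hC, hCν⟩ := hS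
  obtain ⟨M, hM, hMν⟩ := exists_isMatchingOf_card_eq_matchingNumberOf S
  have hCV : C.card ≤ Fintype.card V := C.card_le_univ
  have hdim : Fintype.card V - matchingNumberOf S + k - 1 =
      Fintype.card V - (matchingNumberOf S + 1 - k) := by lia
  rw [hdim]
  apply le_antisymm
  · exact hMν ▸ hM.ringKrullDim_quotient_sqfreePow_le
  · exact hCν ▸ hC.le_ringKrullDim_quotient_sqfreePow hk

theorem stmt3 (Δ : SimplicialComplexOn V)
    (hcov : ∀ v : V, ∃ F ∈ Δ.facets, v ∈ F)
    (hCM : IsCMForestFacets Δ.facets) :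
    ∀ k : ℕ, 1 ≤ k → k ≤ matchingNumberOf Δ.facets →
      ringKrullDim (MvPolynomial V K ⧸ sqfreePow K (facetIdealOf K Δ.facets) k) =
        (((Fintype.card V - matchingNumberOf Δ.facets + k - 1 : ℕ) : ℕ∞) : WithBot ℕ∞) := by
  intro k hk hkν
  exact stmt3_general K (hCM.2.hasKonigProperty Δ.nonempty_facet
    fun F hF G hG hne hsub => hne (Δ.antichain F hF G hG hsub)) hk (Nat.le_succ_of_le hkν)

end Statements
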